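/- Let G be a group acting unitarily on Hilbert spaces H₁ and H₂, with Jacobs–de Leeuw–Glicksberg decompositions H_i = H_{i,o} ⊕ H_{i,r} into flight (weakly mixing) and reversible (compact/almost periodic) vectors. Then the diagonal action of G on H₁ ⊗ H₂ satisfies (H₁ ⊗ H₂)_r = H_{1,r} ⊗ H_{2,r}; equivalently, if f ∈ H_{1,o} and g ∈ H₂, or f ∈ H₁ and g ∈ H_{2,o}, then f ⊗ g is a flight vector, while reversible tensor reversible is reversible. -/

import Mathlib

open RealInnerProductSpace

/-- `f` is a flight vector for the action `U`: `0` lies in the weak closure of the orbit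
`{U g f : g ∈ G}`. -/
def IsFlight {G H : Type*} [NormedAddCommGroup H] [InnerProductSpace ℝ H]
    (U : G → H → H) (f : H) : Prop :=
  ∀ ε > (0 : ℝ), ∀ F : Finset H, ∃ g : G, ∀ w ∈ F, |⟪U g f, w⟫| < ε

/-- The reversible part of a unitary `G`-action: the closed span of all finite-dimensional
invariant subspaces. -/
def revSpace {G H : Type*} [NormedAddCommGroup H] [InnerProductSpace ℝ H]
    (U : G → H ≃ₗᵢ[ℝ] H) : Set H :=
  closure (↑(sSup {V : Submodule ℝ H |
    FiniteDimensional ℝ V ∧ ∀ g : G, ∀ v ∈ V, U g v ∈ V}) : Set H)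


section Helpers

variable {G H H' W : Type*}
    [NormedAddCommGroup H] [InnerProductSpace ℝ H] [CompleteSpace H]
    [NormedAddCommGroup H'] [InnerProductSpace ℝ H'] [CompleteSpace H']
    [NormedAddCommGroup W] [InnerProductSpace ℝ W] [CompleteSpace W]

theorem aux_norm (tmul : H →ₗ[ℝ] H' →ₗ[ℝ] W)
    (hin : ∀ a c : H, ∀ b d : H', ⟪tmul a b, tmul c d⟫ = ⟪a, c⟫ * ⟪b, d⟫) (a : H) (b : H') :
    ‖tmul a b‖ = ‖a‖ * ‖b‖ := by
  have h := hin a a b b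
  simp only [real_inner_self_eq_norm_sq] at h
  rw [← mul_pow] at h
  exact (pow_left_inj₀ (norm_nonneg _) (by positivity) two_ne_zero).1 h

theorem aux_contr (tmul : H →ₗ[ℝ] H' →ₗ[ℝ] W)
    (hin : ∀ a c : H, ∀ b d : H', ⟪tmul a b, tmul c d⟫ = ⟪a, c⟫ * ⟪b, d⟫) :
    ∃ C : W →L[ℝ] H →L[ℝ] H', ∀ v a b, ⟪C v a, b⟫ = ⟪v, tmul a b⟫ := by
  have hb : ∀ a b, ‖tmul a b‖ ≤ 1 * ‖a‖ * ‖b‖ := fun a b => by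
    rw [aux_norm tmul hin, one_mul]
  let tm : H →L[ℝ] H' →L[ℝ] W := tmul.mkContinuous₂ 1 hb
  have htm : ∀ a b, tm a b = tmul a b := fun a b => rfl
  have htn : ∀ a, ‖tm a‖ ≤ ‖a‖ := fun a => by
    refine ContinuousLinearMap.opNorm_le_bound _ (norm_nonneg _) fun b => ?_
    rw [htm, aux_norm tmul hin]
  let C : W →ₗ[ℝ] H →ₗ[ℝ] H' := LinearMap.mk₂ ℝ
    (fun v a => ContinuousLinearMap.adjoint (tm a) v)
    (fun v w a => map_add _ _ _) (fun c v a => map_smul _ _ _)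
    (fun v a b => by simp) (fun c v a => by simp)
  refine ⟨C.mkContinuous₂ 1 fun v a => ?_, fun v a b => ?_⟩
  · change ‖ContinuousLinearMap.adjoint (tm a) v‖ ≤ _
    refine (ContinuousLinearMap.le_opNorm _ _).trans ?_
    rw [LinearIsometryEquiv.norm_map, one_mul, mul_comm]
    exact mul_le_mul_of_nonneg_left (htn a) (norm_nonneg _)
  · change ⟪ContinuousLinearMap.adjoint (tm a) v, b⟫ = _
    rw [ContinuousLinearMap.adjoint_inner_left, htm]

theorem aux_compact (tmul : H →ₗ[ℝ] H' →ₗ[ℝ] W)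
    (hin : ∀ a c : H, ∀ b d : H', ⟪tmul a b, tmul c d⟫ = ⟪a, c⟫ * ⟪b, d⟫)
    (hdense : Dense (↑(Submodule.span ℝ {w : W | ∃ a b, tmul a b = w}) : Set W))
    (C : W →L[ℝ] H →L[ℝ] H') (hC : ∀ v a b, ⟪C v a, b⟫ = ⟪v, tmul a b⟫) (v : W) :
    IsCompactOperator (C v) := by
  have hcl : IsClosed {v : W | IsCompactOperator (C v)} :=
    (isClosed_setOfPred_isCompactOperator (𝕜₁ := ℝ) (σ₁₂ := RingHom.id ℝ)
      (M₁ := H) (M₂ := H')).preimage C.continuous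
  have hsub : (↑(Submodule.span ℝ {w : W | ∃ a b, tmul a b = w}) : Set W) ⊆
      {v : W | IsCompactOperator (C v)} := by
    intro w hw
    change IsCompactOperator (C w)
    induction hw using Submodule.span_induction with
    | mem x hx =>
      obtain ⟨c, d, rfl⟩ := hx
      have : (C (tmul c d) : H → H') =
          (ContinuousLinearMap.toSpanSingleton ℝ d) ∘ (innerSL ℝ c : H →L[ℝ] ℝ) := by
        ext a
        refine ext_inner_right ℝ fun b => ?_
        rw [hC, hin]
        simp [inner_smul_left]
      rw [this]
      exact IsCompactOperator.clm_comp (isCompactOperator_of_locallyCompactSpace_dom _) _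
    | zero => rw [map_zero]; exact isCompactOperator_zero
    | add x y _ _ hx hy => rw [map_add]; exact hx.add hy
    | smul c x _ hx => rw [map_smul]; exact hx.smul c
  have := hcl.closure_subset_iff.2 hsub
  exact this (hdense v)

theorem aux_basis {V : Type*} [NormedAddCommGroup V] [InnerProductSpace ℝ V]
    {ι : Type*} [Fintype ι] (e e' : OrthonormalBasis ι ℝ V) (β : V →ₗ[ℝ] V →ₗ[ℝ] ℝ) :
    ∑ i, β (e' i) (e' i) = ∑ i, β (e i) (e i) := by
  classical
  have h : ∀ j, β (e' j) (e' j) =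
      ∑ i, ∑ k, (⟪e i, e' j⟫ * ⟪e' j, e k⟫) * β (e i) (e k) := by
    intro j
    conv_lhs => rw [← e.sum_repr' (e' j)]
    simp only [map_sum, LinearMap.sum_apply, map_smul, LinearMap.smul_apply, smul_eq_mul]
    simp only [Finset.mul_sum]
    rw [Finset.sum_comm]
    refine Finset.sum_congr rfl fun i _ => Finset.sum_congr rfl fun k _ => ?_
    rw [real_inner_comm (e k) (e' j)]
    ring
  simp only [h]
  rw [Finset.sum_comm]
  refine Finset.sum_congr rfl fun i _ => ?_
  rw [Finset.sum_comm]
  simp only [← Finset.sum_mul, e'.sum_inner_mul_inner]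
  simp [orthonormal_iff_ite.1 e.orthonormal]

theorem aux_main
    (T : G → H ≃ₗᵢ[ℝ] H) (S : G → H' ≃ₗᵢ[ℝ] H') (U : G → W ≃ₗᵢ[ℝ] W)
    (tmul : H →ₗ[ℝ] H' →ₗ[ℝ] W)
    (hin : ∀ a c : H, ∀ b d : H', ⟪tmul a b, tmul c d⟫ = ⟪a, c⟫ * ⟪b, d⟫)
    (hdense : Dense (↑(Submodule.span ℝ {w : W | ∃ a b, tmul a b = w}) : Set W))
    (hdiag : ∀ g a b, U g (tmul a b) = tmul (T g a) (S g b))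
    (f : H) (hf : ∀ x ∈ revSpace T, ⟪x, f⟫ = 0) (V : Submodule ℝ W)
    (hV : FiniteDimensional ℝ V) (hVU : ∀ g : G, ∀ v ∈ V, U g v ∈ V) (v : W) (hv : v ∈ V)
    (b : H') : ⟪v, tmul f b⟫ = 0 := by
  obtain ⟨C, hC⟩ := aux_contr tmul hin
  have hcomp := aux_compact tmul hin hdense C hC
  have heq : ∀ g v x, C (U g v) (T g x) = S g (C v x) := by
    intro g v x
    refine ext_inner_right ℝ fun b => ?_
    obtain ⟨b, rfl⟩ := (S g).surjective b
    rw [hC, ← hdiag, LinearIsometryEquiv.inner_map_map, LinearIsometryEquiv.inner_map_map, hC]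
  let e := stdOrthonormalBasis ℝ V
  let A : H →L[ℝ] H := ∑ i, (ContinuousLinearMap.adjoint (C (e i))) ∘L (C (e i))
  have hA : ∀ x y, ⟪A x, y⟫ = ∑ i, ⟪C (e i) x, C (e i) y⟫ := by
    intro x y
    simp [A, sum_inner, ContinuousLinearMap.adjoint_inner_left]
  have hAc : IsCompactOperator A := by
    have : A ∈ compactOperator (RingHom.id ℝ) H H :=
      Submodule.sum_mem _ fun i _ =>
        show IsCompactOperator (ContinuousLinearMap.adjoint (C (e i)) ∘ C (e i)) from
          (hcomp (e i)).clm_comp _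
    exact this
  have hAs : (A : H →ₗ[ℝ] H).IsSymmetric := by
    intro x y
    change ⟪A x, y⟫ = ⟪x, A y⟫
    rw [real_inner_comm (A y) x, hA, hA]
    exact Finset.sum_congr rfl fun i _ => real_inner_comm _ _
  have hAT : ∀ g x, A (T g x) = T g (A x) := by
    intro g x
    refine ext_inner_right ℝ fun y => ?_
    obtain ⟨y, rfl⟩ := (T g).surjective y
    rw [LinearIsometryEquiv.inner_map_map, hA, hA]
    let u : V →ₗᵢ[ℝ] V :=
      { toLinearMap := ((U g).toLinearEquiv : W →ₗ[ℝ] W).restrict (hVU g)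
        norm_map' := fun v => (U g).norm_map v }
    let e' := e.map (u.toLinearIsometryEquiv rfl)
    have he' : ∀ i, ((e' i : V) : W) = U g (e i) := fun i => by
      simp only [e', OrthonormalBasis.map_apply]
      rfl
    let β : V →ₗ[ℝ] V →ₗ[ℝ] ℝ := LinearMap.mk₂ ℝ
      (fun v w => ⟪C v (T g x), C w (T g y)⟫)
      (fun v w z => by simp [inner_add_left]) (fun c v w => by simp [inner_smul_left])
      (fun v w z => by simp [inner_add_right]) (fun c v w => by simp [inner_smul_right])
    have h := aux_basis e e' β
    simp only [β, LinearMap.mk₂_apply, he', heq, LinearIsometryEquiv.inner_map_map] at h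
    exact h.symm
  have hAf : A f = 0 := by
    have hbot := ContinuousLinearMap.orthogonalComplement_iSup_eigenspaces_eq_bot hAc hAs
    have : A f ∈ (⨆ μ, Module.End.eigenspace (A : Module.End ℝ H) μ)ᗮ := by
      rw [← Submodule.iInf_orthogonal, Submodule.mem_iInf]
      intro μ
      rw [Submodule.mem_orthogonal]
      intro x hx
      have hx' : A x = μ • x := Module.End.mem_eigenspace_iff.1 hx
      have h1 : ⟪x, A f⟫ = μ * ⟪x, f⟫ := by
        have := hAs x f
        change ⟪A x, f⟫ = ⟪x, A f⟫ at this
        rw [← this, hx', inner_smul_left]; rfl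
      rw [h1]
      by_cases hμ : μ = 0
      · simp [hμ]
      · rw [hf x, mul_zero]
        refine subset_closure ?_
        have hle : Module.End.eigenspace (A : Module.End ℝ H) μ ≤ sSup {V : Submodule ℝ H |
            FiniteDimensional ℝ V ∧ ∀ g : G, ∀ v ∈ V, T g v ∈ V} := by
          refine le_sSup ⟨ContinuousLinearMap.finite_dimensional_eigenspace hAc μ hμ, ?_⟩
          intro g z hz
          have hz' : A z = μ • z := Module.End.mem_eigenspace_iff.1 hz
          refine Module.End.mem_eigenspace_iff.2 ?_
          change A (T g z) = μ • T g z
          rw [hAT, hz', map_smul]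
        exact hle hx
    rw [hbot] at this
    simpa using this
  have hz : ∀ i, C (e i) f = 0 := by
    have h := hA f f
    rw [hAf, inner_zero_left] at h
    intro i
    have := (Finset.sum_eq_zero_iff_of_nonneg (fun i _ => real_inner_self_nonneg)).1 h.symm i
      (Finset.mem_univ i)
    exact inner_self_eq_zero.1 this
  have hvz : C v f = 0 := by
    have h := e.sum_repr' ⟨v, hv⟩
    have h2 := congrArg (fun z : V => C (z : W) f) h
    simp only [Submodule.coe_sum, Submodule.coe_smul, map_sum, map_smul,
      _root_.sum_apply, _root_.smul_apply, hz, smul_zero,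
      Finset.sum_const_zero] at h2
    exact h2.symm
  rw [← hC, hvz, inner_zero_left]

/-- The reversible part as a closed submodule. -/
def revSub (U : G → H ≃ₗᵢ[ℝ] H) : Submodule ℝ H :=
  (sSup {V : Submodule ℝ H |
    FiniteDimensional ℝ V ∧ ∀ g : G, ∀ v ∈ V, U g v ∈ V}).topologicalClosure

theorem coe_revSub (U : G → H ≃ₗᵢ[ℝ] H) : (revSub U : Set H) = revSpace U :=
  Submodule.topologicalClosure_coe _

theorem revSub_le (U : G → H ≃ₗᵢ[ℝ] H) (K : Submodule ℝ H) (hK : IsClosed (K : Set H))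
    (h : ∀ V : Submodule ℝ H, FiniteDimensional ℝ V → (∀ g : G, ∀ v ∈ V, U g v ∈ V) → V ≤ K) :
    revSub U ≤ K :=
  Submodule.topologicalClosure_minimal _ (sSup_le fun V hV => h V hV.1 hV.2) hK

theorem aux_orth
    (T : G → H ≃ₗᵢ[ℝ] H) (S : G → H' ≃ₗᵢ[ℝ] H') (U : G → W ≃ₗᵢ[ℝ] W)
    (tmul : H →ₗ[ℝ] H' →ₗ[ℝ] W)
    (hin : ∀ a c : H, ∀ b d : H', ⟪tmul a b, tmul c d⟫ = ⟪a, c⟫ * ⟪b, d⟫)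
    (hdense : Dense (↑(Submodule.span ℝ {w : W | ∃ a b, tmul a b = w}) : Set W))
    (hdiag : ∀ g a b, U g (tmul a b) = tmul (T g a) (S g b))
    (f : H) (hf : f ∈ (revSub T)ᗮ) (v : W) (hv : v ∈ revSub U)
    (b : H') : ⟪v, tmul f b⟫ = 0 := by
  have hf' : ∀ x ∈ revSpace T, ⟪x, f⟫ = 0 := fun x hx => by
    rw [← coe_revSub] at hx
    exact hf x hx
  have := revSub_le U (ℝ ∙ tmul f b)ᗮ (Submodule.isClosed_orthogonal _)
    (fun V hV hVU v hv => by
      rw [Submodule.mem_orthogonal_singleton_iff_inner_left]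
      exact aux_main T S U tmul hin hdense hdiag f hf' V hV hVU v hv b) hv
  rwa [Submodule.mem_orthogonal_singleton_iff_inner_left] at this

theorem aux_rev
    (T : G → H ≃ₗᵢ[ℝ] H) (S : G → H' ≃ₗᵢ[ℝ] H') (U : G → W ≃ₗᵢ[ℝ] W)
    (tmul : H →ₗ[ℝ] H' →ₗ[ℝ] W)
    (hin : ∀ a c : H, ∀ b d : H', ⟪tmul a b, tmul c d⟫ = ⟪a, c⟫ * ⟪b, d⟫)
    (hdiag : ∀ g a b, U g (tmul a b) = tmul (T g a) (S g b))
    (f : H) (hf : f ∈ revSub T) (h : H') (hh : h ∈ revSub S) : tmul f h ∈ revSub U := by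
  have hb : ∀ a b, ‖tmul a b‖ ≤ 1 * ‖a‖ * ‖b‖ := fun a b => by
    rw [aux_norm tmul hin, one_mul]
  let tm : H →L[ℝ] H' →L[ℝ] W := tmul.mkContinuous₂ 1 hb
  have hcl : IsClosed (revSub U : Set W) := Submodule.isClosed_topologicalClosure _
  have c1 : ∀ a, Continuous (tmul a) := fun a => (tm a).continuous
  have c2 : ∀ b, Continuous (tmul.flip b) := fun b => (tm.flip b).continuous
  refine revSub_le T ((revSub U).comap (tmul.flip h)) (hcl.preimage (c2 h)) ?_ hf
  intro V hV hVT a ha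
  refine revSub_le S ((revSub U).comap (tmul a)) (hcl.preimage (c1 a)) ?_ hh
  intro V' hV' hVS b hb
  have hle : Submodule.map₂ tmul V V' ≤ revSub U := by
    refine le_trans ?_ (Submodule.le_topologicalClosure _)
    refine le_sSup ⟨?_, ?_⟩
    · exact Module.Finite.iff_fg.2 (Submodule.FG.map₂ _ (Module.Finite.iff_fg.1 hV)
        (Module.Finite.iff_fg.1 hV'))
    · intro g
      change Submodule.map₂ tmul V V' ≤
        (Submodule.map₂ tmul V V').comap ((U g).toLinearEquiv : W →ₗ[ℝ] W)
      rw [Submodule.map₂_le]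
      intro x hx y hy
      change U g (tmul x y) ∈ Submodule.map₂ tmul V V'
      rw [hdiag]
      exact Submodule.apply_mem_map₂ _ (hVT g x hx) (hVS g y hy)
  exact hle (Submodule.apply_mem_map₂ _ ha hb)

theorem aux_flight
    (T : G → H ≃ₗᵢ[ℝ] H) (S : G → H' ≃ₗᵢ[ℝ] H') (U : G → W ≃ₗᵢ[ℝ] W)
    (tmul : H →ₗ[ℝ] H' →ₗ[ℝ] W)
    (hin : ∀ a c : H, ∀ b d : H', ⟪tmul a b, tmul c d⟫ = ⟪a, c⟫ * ⟪b, d⟫)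
    (hdense : Dense (↑(Submodule.span ℝ {w : W | ∃ a b, tmul a b = w}) : Set W))
    (hdiag : ∀ g a b, U g (tmul a b) = tmul (T g a) (S g b))
    (f : H) (h : H') (hf : IsFlight (fun g x => T g x) f) :
    IsFlight (fun g x => U g x) (tmul f h) := by
  classical
  -- each test vector is controlled by finitely many test vectors of `H`
  have key : ∀ w : W, ∀ ε > (0 : ℝ), ∃ δ > (0 : ℝ), ∃ F : Finset H, ∀ g : G,
      (∀ a ∈ F, |⟪T g f, a⟫| < δ) → |⟪U g (tmul f h), w⟫| < ε := by
    have hspan : ∀ w ∈ Submodule.span ℝ {w : W | ∃ a b, tmul a b = w}, ∀ ε > (0 : ℝ),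
        ∃ δ > (0 : ℝ), ∃ F : Finset H, ∀ g : G,
        (∀ a ∈ F, |⟪T g f, a⟫| < δ) → |⟪U g (tmul f h), w⟫| < ε := by
      intro w hw
      induction hw using Submodule.span_induction with
      | mem x hx =>
        obtain ⟨c, d, rfl⟩ := hx
        intro ε hε
        have hp : 0 < ‖h‖ * ‖d‖ + 1 := by positivity
        refine ⟨ε / (‖h‖ * ‖d‖ + 1), by positivity, {c}, fun g hg => ?_⟩
        have h1 := hg c (by simp)
        rw [hdiag, hin, abs_mul]
        have h2 : |⟪S g h, d⟫| ≤ ‖h‖ * ‖d‖ := by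
          refine (abs_real_inner_le_norm _ _).trans ?_
          rw [LinearIsometryEquiv.norm_map]
        rw [lt_div_iff₀ hp] at h1
        refine lt_of_le_of_lt ?_ h1
        exact mul_le_mul_of_nonneg_left (by linarith) (abs_nonneg _)
      | zero => intro ε hε; exact ⟨1, one_pos, ∅, fun g _ => by simpa using hε⟩
      | add x y _ _ hx hy =>
        intro ε hε
        obtain ⟨δ, hδ, F, hF⟩ := hx (ε / 2) (by positivity)
        obtain ⟨δ', hδ', F', hF'⟩ := hy (ε / 2) (by positivity)
        refine ⟨min δ δ', lt_min hδ hδ', F ∪ F', fun g hg => ?_⟩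
        have h1 := hF g fun a ha =>
          (hg a (Finset.mem_union_left _ ha)).trans_le (min_le_left _ _)
        have h2 := hF' g fun a ha =>
          (hg a (Finset.mem_union_right _ ha)).trans_le (min_le_right _ _)
        rw [inner_add_right]
        refine (abs_add_le _ _).trans_lt ?_
        linarith
      | smul c x _ hx =>
        intro ε hε
        have hp : 0 < |c| + 1 := by positivity
        obtain ⟨δ, hδ, F, hF⟩ := hx (ε / (|c| + 1)) (by positivity)
        refine ⟨δ, hδ, F, fun g hg => ?_⟩
        have h1 := hF g hg
        rw [lt_div_iff₀ hp] at h1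
        rw [inner_smul_right, abs_mul]
        nlinarith [abs_nonneg ⟪U g (tmul f h), x⟫]
    intro w ε hε
    have hp : 0 < ‖tmul f h‖ + 1 := by positivity
    obtain ⟨w', hw', hd⟩ := Metric.mem_closure_iff.1 (hdense w) (ε / 2 / (‖tmul f h‖ + 1))
      (by positivity)
    obtain ⟨δ, hδ, F, hF⟩ := hspan w' hw' (ε / 2) (by positivity)
    refine ⟨δ, hδ, F, fun g hg => ?_⟩
    have h1 := hF g hg
    have h2 : |⟪U g (tmul f h), w - w'⟫| ≤ ‖tmul f h‖ * ‖w - w'‖ := by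
      refine (abs_real_inner_le_norm _ _).trans ?_
      rw [LinearIsometryEquiv.norm_map]
    rw [dist_eq_norm, lt_div_iff₀ hp] at hd
    have h3 : ⟪U g (tmul f h), w⟫ = ⟪U g (tmul f h), w'⟫ + ⟪U g (tmul f h), w - w'⟫ := by
      rw [inner_sub_right]; ring
    rw [h3]
    refine (abs_add_le _ _).trans_lt ?_
    nlinarith [norm_nonneg (w - w')]
  intro ε hε F
  have key2 : ∃ δ > (0 : ℝ), ∃ F' : Finset H, ∀ g : G,
      (∀ a ∈ F', |⟪T g f, a⟫| < δ) → ∀ w ∈ F, |⟪U g (tmul f h), w⟫| < ε := by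
    induction F using Finset.induction_on with
    | empty => exact ⟨1, one_pos, ∅, fun g _ w hw => by simp at hw⟩
    | insert w F _ ih =>
      obtain ⟨δ, hδ, F1, hF⟩ := ih
      obtain ⟨δ', hδ', F', hF'⟩ := key w ε hε
      refine ⟨min δ δ', lt_min hδ hδ', F1 ∪ F', fun g hg => ?_⟩
      have h1 := hF g fun a ha =>
        (hg a (Finset.mem_union_left _ ha)).trans_le (min_le_left _ _)
      have h2 := hF' g fun a ha =>
        (hg a (Finset.mem_union_right _ ha)).trans_le (min_le_right _ _)
      intro z hz
      rcases Finset.mem_insert.1 hz with rfl | hz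
      · exact h2
      · exact h1 z hz
  obtain ⟨δ, hδ, F', hF'⟩ := key2
  obtain ⟨g, hg⟩ := hf δ hδ F'
  exact ⟨g, hF' g hg⟩

end Helpers

/-- **Jacobs–de Leeuw–Glicksberg splitting of a tensor product.**  For unitary actions of
`G` on Hilbert spaces `H, H'` and the diagonal action on their Hilbert tensor product `W`
(modelled abstractly by a bilinear `tmul` with `⟪a⊗b, c⊗d⟫ = ⟪a,c⟫⟪b,d⟫` and dense span of
elementary tensors), the reversible part of `W` is the closed span of tensors of
reversibles: `(H ⊗ H')_r = H_r ⊗ H'_r`; equivalently, flight ⊗ anything and anything ⊗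
flight are flight, while reversible ⊗ reversible is reversible. -/
theorem stmt_9 {G H H' W : Type*} [Group G]
    [NormedAddCommGroup H] [InnerProductSpace ℝ H] [CompleteSpace H]
    [NormedAddCommGroup H'] [InnerProductSpace ℝ H'] [CompleteSpace H']
    [NormedAddCommGroup W] [InnerProductSpace ℝ W] [CompleteSpace W]
    (T : G → H ≃ₗᵢ[ℝ] H) (S : G → H' ≃ₗᵢ[ℝ] H') (U : G → W ≃ₗᵢ[ℝ] W)
    (hT : ∀ g₁ g₂ x, T (g₁ * g₂) x = T g₁ (T g₂ x))
    (hS : ∀ g₁ g₂ x, S (g₁ * g₂) x = S g₁ (S g₂ x))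
    (hU : ∀ g₁ g₂ x, U (g₁ * g₂) x = U g₁ (U g₂ x))
    (tmul : H →ₗ[ℝ] H' →ₗ[ℝ] W)
    (htmul_inner : ∀ a c : H, ∀ b d : H', ⟪tmul a b, tmul c d⟫ = ⟪a, c⟫ * ⟪b, d⟫)
    (hdense : Dense (↑(Submodule.span ℝ {w : W | ∃ a b, tmul a b = w}) : Set W))
    (hdiag : ∀ g a b, U g (tmul a b) = tmul (T g a) (S g b)) :
    revSpace U
      = closure (↑(Submodule.span ℝ
          {w : W | ∃ a ∈ revSpace T, ∃ b ∈ revSpace S, tmul a b = w}) : Set W) ∧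
    (∀ (f : H) (h : H'), IsFlight (fun g x => T g x) f →
      IsFlight (fun g x => U g x) (tmul f h)) ∧
    (∀ (f : H) (h : H'), IsFlight (fun g x => S g x) h →
      IsFlight (fun g x => U g x) (tmul f h)) ∧
    (∀ f ∈ revSpace T, ∀ h ∈ revSpace S, tmul f h ∈ revSpace U) := by
  have hin' : ∀ a c : H', ∀ b d : H,
      ⟪tmul.flip a b, tmul.flip c d⟫ = ⟪a, c⟫ * ⟪b, d⟫ := fun a c b d => by
    rw [LinearMap.flip_apply, LinearMap.flip_apply, htmul_inner, mul_comm]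
  have hset : {w : W | ∃ a b, tmul.flip a b = w} = {w : W | ∃ a b, tmul a b = w} := by
    ext w
    exact exists_comm
  have hdense' : Dense (↑(Submodule.span ℝ {w : W | ∃ a b, tmul.flip a b = w}) : Set W) := by
    rw [hset]; exact hdense
  have hdiag' : ∀ g a b, U g (tmul.flip a b) = tmul.flip (S g a) (T g b) :=
    fun g a b => hdiag g b a
  have hrev := aux_rev T S U tmul htmul_inner hdiag
  refine ⟨?_, aux_flight T S U tmul htmul_inner hdense hdiag,
    fun f h hh => aux_flight S T U tmul.flip hin' hdense' hdiag' h f hh, ?_⟩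
  · simp only [← coe_revSub, SetLike.mem_coe]
    rw [← Submodule.topologicalClosure_coe]
    congr 1
    set K := (Submodule.span ℝ
      {w : W | ∃ a ∈ revSub T, ∃ b ∈ revSub S, tmul a b = w}).topologicalClosure with hK
    have hKcl : IsClosed (K : Set W) := Submodule.isClosed_topologicalClosure _
    have hKle : K ≤ revSub U := by
      refine Submodule.topologicalClosure_minimal _ (Submodule.span_le.2 ?_)
        (Submodule.isClosed_topologicalClosure _)
      rintro w ⟨a, ha, b, hb, rfl⟩
      exact hrev a ha b hb
    have : CompleteSpace K := hKcl.completeSpace_coe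
    have : CompleteSpace (revSub T) :=
      (Submodule.isClosed_topologicalClosure _).completeSpace_coe
    have : CompleteSpace (revSub S) :=
      (Submodule.isClosed_topologicalClosure _).completeSpace_coe
    refine le_antisymm (fun u hu => ?_) hKle
    obtain ⟨p, hp, q, hq, rfl⟩ := K.exists_add_mem_mem_orthogonal u
    have hqU : q ∈ revSub U := by
      have := (revSub U).sub_mem hu (hKle hp)
      simpa using this
    have hq0 : ∀ a b, ⟪q, tmul a b⟫ = 0 := by
      intro a b
      obtain ⟨a1, ha1, a2, ha2, rfl⟩ := (revSub T).exists_add_mem_mem_orthogonal a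
      obtain ⟨b1, hb1, b2, hb2, rfl⟩ := (revSub S).exists_add_mem_mem_orthogonal b
      have h1 := aux_orth T S U tmul htmul_inner hdense hdiag a2 ha2 q hqU (b1 + b2)
      have h2 := aux_orth S T U tmul.flip hin' hdense' hdiag' b2 hb2 q hqU a1
      rw [LinearMap.flip_apply] at h2
      have h3 : ⟪q, tmul a1 b1⟫ = 0 := by
        rw [real_inner_comm]
        exact hq _ (Submodule.le_topologicalClosure _
          (Submodule.subset_span ⟨a1, ha1, b1, hb1, rfl⟩))
      rw [map_add tmul, LinearMap.add_apply, inner_add_right, h1, map_add, inner_add_right, h2, h3]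
      simp
    have hq1 : q = 0 := by
      have hle : Submodule.span ℝ {w : W | ∃ a b, tmul a b = w} ≤ (ℝ ∙ q)ᗮ := by
        refine Submodule.span_le.2 ?_
        rintro w ⟨a, b, rfl⟩
        exact (Submodule.mem_orthogonal_singleton_iff_inner_right).2 (hq0 a b)
      have hmem : q ∈ (ℝ ∙ q)ᗮ :=
        (Submodule.isClosed_orthogonal _).closure_subset_iff.2 hle (hdense q)
      exact inner_self_eq_zero.1 (Submodule.mem_orthogonal_singleton_iff_inner_right.1 hmem)
    rw [hq1, add_zero]
    exact hp
  · intro f hf h hh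
    rw [← coe_revSub] at *
    exact hrev f hf h hh
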